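/- arXiv:2602.20625 — 2 statements merged into one kernel-verified Lean document; each statement's English description precedes it below -/
import Mathlib

section
/- Let k ≥ 1 be a fixed integer and set δ = 1 if k is odd and δ = 2 if k is even. In the ring of formal power series in x over ℤ[y], let F = Σ_{n≥0} (Σ_{m∈P(n)} y^{B(m)}) x^n. Then ((1 − 2x)(1 − x²) − (y − 1)(1 − x)·x^{k+δ}) · F = (1 − x)(1 − x²). -/
open PowerSeries

/-- The number of parts of a composition that are even and strictly greater than `k`. -/
def Bstat (k : ℕ) {n : ℕ} (m : Composition n) : ℕ :=
  m.blocks.countP fun j => decide (Even j ∧ k < j)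

/-- The bivariate generating function `F(x,y) = Σ_n (Σ_{m ∈ P(n)} y^{B(m)}) x^n`,
viewed as a power series in `x` over `ℤ[y]`. -/
noncomputable def Fgen (k : ℕ) : PowerSeries (Polynomial ℤ) :=
  PowerSeries.mk fun n => ∑ m : Composition n, (Polynomial.X : Polynomial ℤ) ^ Bstat k m

/-!
Removing the first part of a nonempty composition shows that, when a part `j` has weight `w j`, the
generating function `G` of compositions satisfies `G = 1 + P * G`, where `P = ∑_{j ≥ 1} w j X ^ j`.
If the parts `e, e + r, e + 2r, …` have weight `y` and all others weight `1`, then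
`P = X / (1 - X) + (y - 1) X ^ e / (1 - X ^ r)`, and clearing denominators gives a polynomial
equation for `G`. The even integers greater than `k` are the progression with `e = k + δ`, `r = 2`.
-/

open Finset.HasAntidiagonal (antidiagonal mem_antidiagonal)

section FirstPart

/-- The composition of `n + 1` with first part `i + 1` and remaining parts `c`, where `c` is a
composition of `j` and `i + j = n`. The first part is shifted so that the pairs `(i, j)` range over
the antidiagonal of `n`, as in the coefficients of a product of power series. -/
def consComposition (n : ℕ) (p : Σ ij : antidiagonal n, Composition ij.1.2) :
    Composition (n + 1) where
  blocks := (p.1.1.1 + 1) :: p.2.blocks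
  blocks_pos hj := by
    rcases List.mem_cons.1 hj with rfl | hj
    · exact Nat.succ_pos _
    · exact p.2.blocks_pos hj
  blocks_sum := by
    have hsum := mem_antidiagonal.1 p.1.2
    rw [List.sum_cons, p.2.blocks_sum]
    omega

theorem consComposition_injective (n : ℕ) : Function.Injective (consComposition n) := by
  rintro ⟨⟨⟨i, j⟩, hij⟩, c⟩ ⟨⟨⟨i', j'⟩, hij'⟩, c'⟩ h
  obtain ⟨hfirst, hrest⟩ := List.cons.inj (congrArg Composition.blocks h)
  rw [mem_antidiagonal] at hij hij'
  obtain rfl : i = i' := Nat.succ.inj hfirst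
  obtain rfl : j = j' := by omega
  obtain rfl : c = c' := Composition.ext hrest
  rfl

theorem consComposition_surjective (n : ℕ) : Function.Surjective (consComposition n) := by
  rintro ⟨_ | ⟨a, l⟩, hpos, hsum⟩
  · simp at hsum
  · obtain ⟨i, rfl⟩ := Nat.exists_eq_succ_of_ne_zero (hpos List.mem_cons_self).ne'
    rw [List.sum_cons] at hsum
    exact ⟨⟨⟨(i, l.sum), mem_antidiagonal.2 (by lia)⟩,
      ⟨l, fun hj => hpos (List.mem_cons_of_mem _ hj), rfl⟩⟩, rfl⟩

theorem consComposition_bijective (n : ℕ) : Function.Bijective (consComposition n) :=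
  ⟨consComposition_injective n, consComposition_surjective n⟩

end FirstPart

theorem pow_countP_eq_prod_map_ite {α M : Type*} [Monoid M] (y : M) (p : α → Prop)
    [DecidablePred p] (l : List α) :
    y ^ l.countP (p ·) = (l.map fun a => if p a then y else 1).prod := by
  induction l with
  | nil => simp
  | cons a l ih => by_cases h : p a <;> simp [h, ← ih, pow_succ']

section Weighted

variable {R : Type*}

/-- The generating function of compositions in which each composition is weighted by the product of
the weights `w j` of its parts `j`. -/
noncomputable def weightedCompositionSeries [Semiring R] (w : ℕ → R) : R⟦X⟧ :=
  mk fun n => ∑ m : Composition n, (m.blocks.map w).prod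

/-- The generating function `∑_{j ≥ 1} w j X ^ j` of a single part; the value `w 0` is ignored. -/
noncomputable def partSeries [Semiring R] (w : ℕ → R) : R⟦X⟧ :=
  X * mk fun i => w (i + 1)

theorem coeff_zero_partSeries [Semiring R] (w : ℕ → R) : coeff 0 (partSeries w) = 0 :=
  coeff_zero_X_mul _

theorem coeff_succ_partSeries [Semiring R] (w : ℕ → R) (n : ℕ) :
    coeff (n + 1) (partSeries w) = w (n + 1) := by
  rw [partSeries, coeff_succ_X_mul, coeff_mk]

theorem coeff_zero_weightedCompositionSeries [Semiring R] (w : ℕ → R) :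
    coeff 0 (weightedCompositionSeries w) = 1 := by
  have blocks_eq_nil (m : Composition 0) : m.blocks = [] := m.blocks_eq_nil.2 rfl
  simp [weightedCompositionSeries, blocks_eq_nil, composition_card]

theorem coeff_succ_weightedCompositionSeries [Semiring R] (w : ℕ → R) (n : ℕ) :
    coeff (n + 1) (weightedCompositionSeries w) =
      ∑ ij ∈ antidiagonal n, w (ij.1 + 1) * coeff ij.2 (weightedCompositionSeries w) := by
  simp only [weightedCompositionSeries, coeff_mk]
  rw [← (consComposition_bijective n).sum_comp, Fintype.sum_sigma]
  simp only [consComposition, List.map_cons, List.prod_cons, Finset.mul_sum]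
  exact Finset.sum_coe_sort (antidiagonal n)
    fun ij => ∑ c : Composition ij.2, w (ij.1 + 1) * (c.blocks.map w).prod

theorem weightedCompositionSeries_eq_one_add [Semiring R] (w : ℕ → R) :
    weightedCompositionSeries w = 1 + partSeries w * weightedCompositionSeries w := by
  ext n
  rw [partSeries, mul_assoc, map_add]
  cases n with
  | zero => rw [coeff_zero_weightedCompositionSeries, coeff_zero_X_mul, coeff_zero_one, add_zero]
  | succ n =>
    rw [coeff_succ_X_mul, coeff_mul, coeff_succ_weightedCompositionSeries, coeff_one,
      if_neg n.succ_ne_zero, zero_add]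
    simp only [coeff_mk]

theorem partSeries_one_mul_one_sub_X [CommRing R] : partSeries (1 : ℕ → R) * (1 - X) = X := by
  change X * mk 1 * (1 - X) = X
  rw [mul_assoc, mk_one_mul_one_sub_eq_one, mul_one]

theorem partSeries_ite_one [Ring R] (y : R) (p : ℕ → Prop) [DecidablePred p] :
    partSeries (fun j => if p j then y else 1) =
      partSeries 1 + C (y - 1) * partSeries (fun j => if p j then 1 else 0) := by
  ext (_ | n)
  · simp only [map_add, coeff_C_mul, coeff_zero_partSeries, mul_zero, add_zero]
  · by_cases h : p (n + 1) <;> simp [-map_sub, coeff_C_mul, coeff_succ_partSeries, h]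

end Weighted

section Progression

variable {R : Type*} [CommRing R] {e r : ℕ}

theorem expand_mk_one_mul_one_sub_X_pow (hr : r ≠ 0) :
    expand r hr (mk 1 : R⟦X⟧) * (1 - X ^ r) = 1 := by
  simpa using congrArg (expand r hr) (mk_one_mul_one_sub_eq_one R)

theorem partSeries_progression (he : e ≠ 0) (hr : r ≠ 0) :
    partSeries (fun j => if e ≤ j ∧ j ≡ e [MOD r] then (1 : R) else 0) =
      X ^ e * expand r hr (mk 1) := by
  ext (_ | n)
  · simp [coeff_zero_partSeries, he]
  · by_cases hen : e ≤ n + 1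
    · simp [coeff_succ_partSeries, coeff_X_pow_mul', coeff_expand, hen,
        Nat.ModEq.comm (a := n + 1), Nat.modEq_iff_dvd' hen]
    · simp [coeff_succ_partSeries, coeff_X_pow_mul', hen]

theorem partSeries_progression_mul_one_sub_X_pow (he : e ≠ 0) (hr : r ≠ 0) :
    partSeries (fun j => if e ≤ j ∧ j ≡ e [MOD r] then (1 : R) else 0) * (1 - X ^ r) = X ^ e := by
  rw [partSeries_progression he hr, mul_assoc, expand_mk_one_mul_one_sub_X_pow, mul_one]

theorem stmt2_general (y : R) (he : e ≠ 0) (hr : r ≠ 0) :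
    ((1 - 2 * X) * (1 - X ^ r) - C (y - 1) * (1 - X) * X ^ e) *
        mk (fun n => ∑ m : Composition n, y ^ m.blocks.countP fun j => e ≤ j ∧ j ≡ e [MOD r])
      = (1 - X) * (1 - X ^ r) := by
  simp only [pow_countP_eq_prod_map_ite]
  set w : ℕ → R := fun j => if e ≤ j ∧ j ≡ e [MOD r] then y else 1
  change _ * weightedCompositionSeries w = _
  have first_part := weightedCompositionSeries_eq_one_add w
  rw [partSeries_ite_one] at first_part
  linear_combination (1 - X) * (1 - X ^ r) * first_part
    + (1 - X ^ r) * weightedCompositionSeries w * partSeries_one_mul_one_sub_X (R := R)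
    + C (y - 1) * (1 - X) * weightedCompositionSeries w
      * partSeries_progression_mul_one_sub_X_pow (R := R) he hr

end Progression

theorem even_and_lt_iff_progression {k δ : ℕ} (hδ : δ = if Odd k then 1 else 2) (j : ℕ) :
    Even j ∧ k < j ↔ k + δ ≤ j ∧ j ≡ k + δ [MOD 2] := by
  simp only [Nat.ModEq, Nat.even_iff, Nat.odd_iff] at hδ ⊢
  split_ifs at hδ <;> omega

theorem stmt2 (k : ℕ) (hk : 1 ≤ k) (δ : ℕ) (hδ : δ = if Odd k then 1 else 2) :
    ((1 - 2 * PowerSeries.X) * (1 - PowerSeries.X ^ 2)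
        - PowerSeries.C (R := Polynomial ℤ) (Polynomial.X - 1) * (1 - PowerSeries.X)
          * PowerSeries.X ^ (k + δ)) * Fgen k
      = (1 - PowerSeries.X) * (1 - PowerSeries.X ^ 2) := by
  simp only [Fgen, Bstat, even_and_lt_iff_progression hδ]
  exact stmt2_general Polynomial.X (by omega) two_ne_zero
end

section
/- Let k ≥ 2 be a fixed integer and set δ = 1 if k is odd and δ = 2 if k is even. Let R_k(X) = (1 − 2X)(1 + X) + X^{k+δ}, a polynomial of degree k + δ, and assume that R_k has k + δ pairwise distinct complex roots α_1, …, α_{k+δ}. For n ≥ 0 let c_k(n) denote the number of compositions of n having no even part strictly greater than k. Then for every n ≥ 0 one has, as an identity in ℂ: c_k(n) = Σ_{i=1}^{k+δ} C_i·α_i^{−n}, where C_i = −(1 − α_i²)/(α_i·R_k'(α_i)). -/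
/-- `cComp k n` is the number of compositions of `n` having no even part strictly
greater than `k`. -/
def cComp (k n : ℕ) : ℕ :=
  (Finset.univ.filter fun m : Composition n => Bstat k m = 0).card

/-!
Splitting off the first part of a composition shows that compositions without even parts `≥ N`,
`N = k + δ`, have generating function `1 / (1 - S)`, where
`S = X / (1 - X) - X ^ N / (1 - X ^ 2)` enumerates the admissible parts. Clearing denominators
turns this into `(1 - X ^ 2) / R`. As `R` is monic of degree `N > 2` with distinct nonzero roots,
Lagrange interpolation of `1 - X ^ 2` at the roots is its partial fraction decomposition, and each
`1 / (X - α)` expands as a geometric series.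
-/

open Finset hiding mk
open scoped PowerSeries

section Composition

open PowerSeries

lemma sum_composition_succ {M : Type*} [AddCommMonoid M] (f : List ℕ → M) (n : ℕ) :
    ∑ c : Composition (n + 1), f c.blocks =
      ∑ p ∈ antidiagonal n, ∑ c : Composition p.2, f ((p.1 + 1) :: c.blocks) := by
  rw [sum_sigma']
  symm
  refine sum_bij (fun x hx ↦ ⟨(x.1.1 + 1) :: x.2.blocks, @fun j hj ↦ ?_, ?_⟩) ?_ ?_ ?_ ?_
  · obtain rfl | hj := List.mem_cons.1 hj
    exacts [Nat.succ_pos _, x.2.blocks_pos hj]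
  · have hadd := HasAntidiagonal.mem_antidiagonal.1 (mem_sigma.1 hx).1
    rw [List.sum_cons, x.2.blocks_sum]
    lia
  · simp
  · rintro ⟨⟨a, b⟩, c⟩ _ ⟨⟨a', b'⟩, c'⟩ _ h
    obtain ⟨ha, hc⟩ := List.cons.inj (congrArg Composition.blocks h)
    obtain rfl : a = a' := Nat.succ_injective ha
    obtain rfl : b = b' := c.blocks_sum.symm.trans (hc ▸ c'.blocks_sum)
    obtain rfl : c = c' := Composition.ext hc
    rfl
  · rintro ⟨_ | ⟨_ | a, t⟩, hpos, hsum⟩ -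
    · simp at hsum
    · simp at hpos
    · refine ⟨⟨(a, t.sum), ⟨t, fun hj ↦ hpos (List.mem_cons_of_mem _ hj), rfl⟩⟩, ?_, rfl⟩
      rw [List.sum_cons] at hsum
      simp only [mem_sigma, HasAntidiagonal.mem_antidiagonal, mem_univ, and_true]
      lia
  · simp

lemma prod_map_boole {ι R : Type*} [MonoidWithZero R] (p : ι → Prop) [DecidablePred p]
    (l : List ι) :
    (l.map fun j ↦ if p j then (1 : R) else 0).prod = if ∀ j ∈ l, p j then 1 else 0 := by
  induction l with
  | nil => simp
  | cons a l ih => simp [ih, ← ite_and, and_comm]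

/-- The generating function of compositions by size, where a composition is weighted by the product
of the weights `w j` of its parts `j`. The value `w 0` is irrelevant, as parts are positive. -/
def compositionGenFun {R : Type*} [Semiring R] (w : ℕ → R) : R⟦X⟧ :=
  mk fun n ↦ ∑ c : Composition n, (c.blocks.map w).prod

lemma compositionGenFun_eq_one_add {R : Type*} [Semiring R] (w : ℕ → R) :
    compositionGenFun w = 1 + X * (mk fun j ↦ w (j + 1)) * compositionGenFun w := by
  ext (_ | n)
  · simp [compositionGenFun, mul_assoc, (Composition.blocks_eq_nil _).2, composition_card]
  · rw [map_add, mul_assoc, coeff_succ_X_mul, coeff_mul]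
    simp [compositionGenFun, coeff_one, sum_composition_succ fun l ↦ (l.map w).prod, mul_sum]

lemma cComp_eq_coeff_compositionGenFun {R : Type*} [Semiring R] (k n : ℕ) :
    (cComp k n : R) =
      coeff n (compositionGenFun fun j ↦ if ¬(Even j ∧ k < j) then 1 else 0) := by
  simp only [compositionGenFun, coeff_mk, prod_map_boole, sum_boole, cComp, Bstat,
    List.countP_eq_zero, decide_eq_true_eq]

end Composition

section EvenParts

open PowerSeries

variable {R : Type*} [CommRing R] {N : ℕ}

lemma one_sub_X_sq_mul_mk_even_ge (hN : Even N) :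
    (1 - X ^ 2) * (mk fun j ↦ if Even j ∧ N ≤ j then (1 : R) else 0) = X ^ N := by
  ext j
  simp only [sub_mul, one_mul, map_sub, coeff_X_pow_mul', coeff_X_pow, coeff_mk]
  grind

lemma X_mul_mk_not_even_ge (hN : 0 < N) :
    X * (mk fun j ↦ if ¬(Even (j + 1) ∧ N ≤ j + 1) then (1 : R) else 0) =
      X * mk 1 - mk fun j ↦ if Even j ∧ N ≤ j then 1 else 0 := by
  ext (_ | j)
  · simp [hN.ne']
  · simp only [coeff_succ_X_mul, map_sub, coeff_mk, Pi.one_apply]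
    split_ifs <;> simp

lemma one_sub_X_sq_mul_X_mul_mk_not_even_ge (hN : Even N) (hN₀ : 0 < N) :
    (1 - X ^ 2) * (X * mk fun j ↦ if ¬(Even (j + 1) ∧ N ≤ j + 1) then (1 : R) else 0) =
      X * (1 + X) - X ^ N := by
  rw [X_mul_mk_not_even_ge hN₀, mul_sub, one_sub_X_sq_mul_mk_even_ge hN]
  linear_combination X * (1 + X) * mk_one_mul_one_sub_eq_one R

end EvenParts

section Denominator

variable {R : Type*} [CommRing R] {N : ℕ}

/-- The denominator `(1 - 2X)(1 + X) + X ^ N` of the generating function of compositions without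
even parts `≥ N`. The polynomial `R_k` is `denomPoly R (k + δ)`, since `k + δ` is the least even
number greater than `k`. -/
noncomputable def denomPoly (R : Type*) [CommRing R] (N : ℕ) : Polynomial R :=
  (1 - 2 * Polynomial.X) * (1 + Polynomial.X) + Polynomial.X ^ N

lemma coe_denomPoly :
    (denomPoly R N : R⟦X⟧) =
      (1 - 2 * PowerSeries.X) * (1 + PowerSeries.X) + PowerSeries.X ^ N := by
  rw [← Polynomial.coeToPowerSeries.ringHom_apply]
  simp only [denomPoly, map_add, map_mul, map_sub, map_one, map_ofNat, map_pow,
    Polynomial.coeToPowerSeries.ringHom_apply, Polynomial.coe_X]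

lemma eval_zero_denomPoly (hN : N ≠ 0) : (denomPoly R N).eval 0 = 1 := by
  simp [denomPoly, hN]

lemma degree_one_sub_two_X_mul_one_add_X_lt (hN : 2 < N) :
    ((1 - 2 * Polynomial.X) * (1 + Polynomial.X) : Polynomial R).degree < N := by
  have hle : ((1 - 2 * Polynomial.X) * (1 + Polynomial.X) : Polynomial R).degree ≤ 2 := by
    compute_degree
  exact hle.trans_lt (mod_cast hN)

lemma monic_denomPoly (hN : 2 < N) : (denomPoly R N).Monic := by
  rw [denomPoly, add_comm]
  exact Polynomial.monic_X_pow_add (degree_one_sub_two_X_mul_one_add_X_lt hN)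

lemma natDegree_denomPoly [Nontrivial R] (hN : 2 < N) : (denomPoly R N).natDegree = N := by
  rw [denomPoly, Polynomial.natDegree_add_eq_right_of_degree_lt, Polynomial.natDegree_X_pow]
  simpa using degree_one_sub_two_X_mul_one_add_X_lt hN

lemma denomPoly_mul_compositionGenFun (hN : Even N) (hN₀ : 0 < N) :
    (denomPoly R N : R⟦X⟧) *
      compositionGenFun (fun j ↦ if ¬(Even j ∧ N ≤ j) then (1 : R) else 0) =
        1 - PowerSeries.X ^ 2 := by
  have hcomp := compositionGenFun_eq_one_add fun j ↦ if ¬(Even j ∧ N ≤ j) then (1 : R) else 0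
  have hparts := one_sub_X_sq_mul_X_mul_mk_not_even_ge (R := R) hN hN₀
  rw [coe_denomPoly]
  linear_combination (1 - PowerSeries.X ^ 2) * hcomp +
    compositionGenFun (fun j ↦ if ¬(Even j ∧ N ≤ j) then (1 : R) else 0) * hparts

lemma even_add_of_eq_ite_odd {k δ : ℕ} (hδ : δ = if Odd k then 1 else 2) : Even (k + δ) := by
  grind

lemma even_and_lt_iff_of_eq_ite_odd {k δ : ℕ} (hδ : δ = if Odd k then 1 else 2) (j : ℕ) :
    Even j ∧ k < j ↔ Even j ∧ k + δ ≤ j := by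
  grind

lemma denomPoly_mul_mk_cComp {k δ : ℕ} (hδ : δ = if Odd k then 1 else 2) :
    (denomPoly R (k + δ) : R⟦X⟧) * (PowerSeries.mk fun n ↦ (cComp k n : R)) =
      1 - PowerSeries.X ^ 2 := by
  have hN₀ : 0 < k + δ := by grind
  rw [← denomPoly_mul_compositionGenFun (even_add_of_eq_ite_odd hδ) hN₀]
  congr 1
  ext n
  simp only [PowerSeries.coeff_mk, cComp_eq_coeff_compositionGenFun,
    even_and_lt_iff_of_eq_ite_odd hδ]

end Denominator

section PartialFractions

open Lagrange Polynomial

lemma eq_nodal_of_monic {R ι : Type*} [CommRing R] [IsDomain R] {s : Finset ι} {v : ι → R}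
    {Q : R[X]} (hQ : Q.Monic) (hdeg : Q.natDegree = #s) (hv : Set.InjOn v s)
    (hroot : ∀ i ∈ s, Q.IsRoot (v i)) : Q = nodal s v := by
  have hdeg' : Q.degree = #s := by rw [degree_eq_natDegree hQ.ne_zero, hdeg]
  refine eq_of_degree_le_of_eval_index_eq s hv hdeg'.le (hdeg'.trans degree_nodal.symm) ?_ ?_
  · rw [hQ.leadingCoeff, nodal_monic.leadingCoeff]
  · intro i hi
    rw [hroot i hi, eval_nodal_at_node hi]

variable {F ι : Type*} [Field F] {s : Finset ι} {v : ι → F} {P : F[X]}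

lemma eq_sum_C_mul_nodal_erase [DecidableEq ι] (hv : Set.InjOn v s) (hP : P.degree < #s) :
    P = ∑ i ∈ s, C (P.eval (v i) / (nodal s v).derivative.eval (v i)) * nodal (s.erase i) v := by
  conv_lhs => rw [eq_interpolate hv hP, interpolate_eq_nodalWeight_mul_nodal_div_X_sub_C]
  refine sum_congr rfl fun i hi ↦ ?_
  rw [← nodal_erase_eq_nodal_div hi, nodalWeight_eq_eval_derivative_nodal hi, div_eq_inv_mul, C_mul]
  ring

lemma coe_nodal_erase [DecidableEq ι] {i : ι} (hi : i ∈ s) (hvi : v i ≠ 0) :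
    (nodal (s.erase i) v : F⟦X⟧) =
      (nodal s v : F⟦X⟧) * (PowerSeries.X - PowerSeries.C (v i))⁻¹ := by
  rw [PowerSeries.eq_mul_inv_iff_mul_eq (by simpa using hvi), nodal_eq_mul_nodal_erase hi]
  simp [mul_comm]

lemma coeff_X_sub_C_inv {a : F} (ha : a ≠ 0) (n : ℕ) :
    PowerSeries.coeff n (PowerSeries.X - PowerSeries.C a)⁻¹ = -a⁻¹ ^ (n + 1) := by
  have hinv : (PowerSeries.X - PowerSeries.C a)⁻¹ = -PowerSeries.invUnitsSub (Units.mk0 a ha) := by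
    rw [PowerSeries.inv_eq_iff_mul_eq_one (by simpa using ha), neg_mul, ← mul_neg, neg_sub]
    exact PowerSeries.invUnitsSub_mul_sub _
  simp [hinv, divp]

lemma eq_sum_C_mul_X_sub_C_inv_of_nodal_mul_eq (hv : Set.InjOn v s) (hv₀ : ∀ i ∈ s, v i ≠ 0)
    (hP : P.degree < #s) {f : F⟦X⟧} (hf : (nodal s v : F⟦X⟧) * f = P) :
    f = ∑ i ∈ s, PowerSeries.C (P.eval (v i) / (nodal s v).derivative.eval (v i)) *
      (PowerSeries.X - PowerSeries.C (v i))⁻¹ := by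
  classical
  have hnodal : (nodal s v : F⟦X⟧) ≠ 0 := by simpa using nodal_ne_zero
  apply mul_left_cancel₀ hnodal
  calc (nodal s v : F⟦X⟧) * f
    _ = coeToPowerSeries.ringHom (∑ i ∈ s,
          C (P.eval (v i) / (nodal s v).derivative.eval (v i)) * nodal (s.erase i) v) := by
        rw [hf, ← eq_sum_C_mul_nodal_erase hv hP, coeToPowerSeries.ringHom_apply]
    _ = _ := by
        rw [map_sum, mul_sum]
        refine sum_congr rfl fun i hi ↦ ?_
        rw [coeToPowerSeries.ringHom_apply, Polynomial.coe_mul, coe_C,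
          coe_nodal_erase hi (hv₀ i hi), mul_left_comm]

lemma coeff_eq_sum_of_nodal_mul_eq (hv : Set.InjOn v s) (hv₀ : ∀ i ∈ s, v i ≠ 0)
    (hP : P.degree < #s) {f : F⟦X⟧} (hf : (nodal s v : F⟦X⟧) * f = P) (n : ℕ) :
    PowerSeries.coeff n f = ∑ i ∈ s,
      -(P.eval (v i) / (v i * (nodal s v).derivative.eval (v i))) * (v i)⁻¹ ^ n := by
  rw [eq_sum_C_mul_X_sub_C_inv_of_nodal_mul_eq hv hv₀ hP hf, map_sum]
  refine sum_congr rfl fun i hi ↦ ?_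
  rw [PowerSeries.coeff_C_mul, coeff_X_sub_C_inv (hv₀ i hi), pow_succ, div_mul_eq_div_div_swap,
    div_eq_mul_inv _ (v i)]
  ring

end PartialFractions

theorem stmt6_general {F : Type*} [Field F] (k : ℕ) (hk : 2 ≤ k) (δ : ℕ)
    (hδ : δ = if Odd k then 1 else 2) (R : Polynomial F)
    (hR : R = (1 - 2 * Polynomial.X) * (1 + Polynomial.X) + Polynomial.X ^ (k + δ))
    (α : Fin (k + δ) → F) (hα : Function.Injective α) (hroot : ∀ i, R.IsRoot (α i))
    (n : ℕ) :
    (cComp k n : F) =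
      ∑ i : Fin (k + δ),
        (-((1 - α i ^ 2) / (α i * R.derivative.eval (α i)))) * (α i)⁻¹ ^ n := by
  obtain rfl : R = denomPoly F (k + δ) := hR
  have hN : 2 < k + δ := by grind
  have hnodal : denomPoly F (k + δ) = Lagrange.nodal univ α :=
    eq_nodal_of_monic (monic_denomPoly hN) (by simpa using natDegree_denomPoly hN) hα.injOn
      fun i _ ↦ hroot i
  have hα₀ (i) : α i ≠ 0 := by
    intro hi
    have hone := eval_zero_denomPoly (R := F) (N := k + δ) (by lia)
    exact zero_ne_one ((hroot i).symm.trans (hi ▸ hone))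
  have hdeg : (1 - Polynomial.X ^ 2 : Polynomial F).degree < #(univ : Finset (Fin (k + δ))) := by
    have hle : (1 - Polynomial.X ^ 2 : Polynomial F).degree ≤ 2 := by compute_degree
    exact hle.trans_lt (by simpa using mod_cast hN)
  have hgen : (Lagrange.nodal univ α : F⟦X⟧) * (PowerSeries.mk fun n ↦ (cComp k n : F)) =
      (1 - Polynomial.X ^ 2 : Polynomial F) := by
    simpa [← hnodal] using denomPoly_mul_mk_cComp hδ
  simpa [← hnodal] using coeff_eq_sum_of_nodal_mul_eq hα.injOn (fun i _ ↦ hα₀ i) hdeg hgen n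

theorem stmt6 (k : ℕ) (hk : 2 ≤ k) (δ : ℕ) (hδ : δ = if Odd k then 1 else 2)
    (R : Polynomial ℂ)
    (hR : R = (1 - 2 * Polynomial.X) * (1 + Polynomial.X) + Polynomial.X ^ (k + δ))
    (α : Fin (k + δ) → ℂ) (hα : Function.Injective α) (hroot : ∀ i, R.IsRoot (α i))
    (n : ℕ) :
    (cComp k n : ℂ) =
      ∑ i : Fin (k + δ),
        (-((1 - α i ^ 2) / (α i * R.derivative.eval (α i)))) * (α i)⁻¹ ^ n :=
  stmt6_general k hk δ hδ R hR α hα hroot n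
end
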